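/- Let d be a positive natural number, m, m' ∈ ℝ^d, Δ > 0 with ‖m − m'‖₂ ≤ Δ, ε ∈ (0,1), δ ∈ (0,1), and σ ≥ (Δ/ε)·√(2·log(1.25/δ)). Let μ be the product measure on ℝ^d whose j-th factor is the Gaussian N(m_j, σ²), and ν the product measure whose j-th factor is N(m'_j, σ²). Then for every measurable set S ⊆ ℝ^d, μ(S) ≤ e^ε · ν(S) + δ. -/

import Mathlib

open MeasureTheory ProbabilityTheory

/-!
Under the first Gaussian product `μ`, the log-likelihood ratio `L` of `μ` against the second one
`ν` has law `N(q / 2, q)`, where `q` is the squared Mahalanobis distance of the means. Since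
`μ S ≤ e^ε ν S + μ {L > ε}`, everything reduces to a tail of a standard Gaussian `Z`: with
`c = √(2 log (1.25 / δ))`, so that `δ = (5 / 4) e^{-c² / 2}`, the condition `√q c ≤ ε ≤ 1` forces
`Z > c - 1 / (2 c)` whenever `√q Z + q / 2 > ε`. Recentering `Z` at `c` gives
`P(Z > c - s) = e^{-c² / 2} E[e^{-c Z}; Z > -s]`; splitting the expectation at `0`, it is at most
`1 / 2 + e^{c s} s / √(2π)`, which is at most `5 / 4` for `s = 1 / (2 c)` and `c ≥ 2 / 3`.
-/

open scoped NNReal ENNReal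

section Measure

variable {α : Type*} [MeasurableSpace α]

lemma withDensity_apply_le_mul (μ : Measure α) [SFinite μ] {f : α → ℝ≥0∞} {C : ℝ≥0∞} {s : Set α}
    (hf : ∀ x ∈ s, f x ≤ C) : μ.withDensity f s ≤ C * μ s := by
  rw [withDensity_apply', ← setLIntegral_const]
  exact setLIntegral_mono measurable_const hf

lemma withDensity_apply_le_mul_add (μ : Measure α) [SFinite μ] (f : α → ℝ≥0∞) (C : ℝ≥0∞)
    (s : Set α) : μ.withDensity f s ≤ C * μ s + μ.withDensity f {x | C < f x} := by
  set bad := {x | C < f x}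
  calc μ.withDensity f s
    _ ≤ μ.withDensity f (s ∩ bad) + μ.withDensity f (s \ bad) := measure_le_inter_add_sdiff _ _ _
    _ ≤ μ.withDensity f bad + C * μ (s \ bad) := by
      gcongr
      · exact Set.inter_subset_right
      · exact withDensity_apply_le_mul μ fun x hx ↦ not_lt.1 hx.2
    _ ≤ C * μ s + μ.withDensity f bad := by
      rw [add_comm]
      gcongr
      exact Set.sdiff_subset

lemma measure_le_half_of_disjoint_neg [Neg α] [MeasurableNeg α] {μ : Measure α}
    [IsProbabilityMeasure μ] [μ.IsNegInvariant] {s : Set α} (hs : MeasurableSet s)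
    (hdisj : Disjoint (Neg.neg ⁻¹' s) s) : μ s ≤ 2⁻¹ := by
  have hneg : μ (Neg.neg ⁻¹' s) = μ s :=
    (Measure.measurePreserving_neg μ).measure_preimage hs.nullMeasurableSet
  have htwo : μ s * 2 ≤ 1 := by
    calc μ s * 2 = μ (Neg.neg ⁻¹' s ∪ s) := by rw [measure_union hdisj hs, hneg, mul_two]
      _ ≤ 1 := prob_le_one
  rwa [← ENNReal.le_div_iff_mul_le (by simp) (by simp), one_div] at htwo

lemma pi_withDensity {ι : Type*} [Fintype ι] {X : ι → Type*} [∀ i, MeasurableSpace (X i)]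
    (μ : ∀ i, Measure (X i)) [∀ i, IsProbabilityMeasure (μ i)] {f : ∀ i, X i → ℝ≥0∞}
    (hf : ∀ i, Measurable (f i)) [∀ i, SigmaFinite ((μ i).withDensity (f i))] :
    Measure.pi (fun i ↦ (μ i).withDensity (f i))
      = (Measure.pi μ).withDensity (fun x ↦ ∏ i, f i (x i)) := by
  refine Measure.pi_eq fun s hs ↦ ?_
  have hm : ∀ i, Measurable ((s i).indicator (f i)) := fun i ↦ (hf i).indicator (hs i)
  have hind : (Set.univ.pi s).indicator (fun x ↦ ∏ i, f i (x i))
      = fun x ↦ ∏ i, (s i).indicator (f i) (x i) := by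
    classical
    ext x
    simp only [Set.indicator_apply, Set.mem_univ_pi, Finset.prod_ite_zero, Finset.mem_univ,
      true_imp_iff]
  calc (Measure.pi μ).withDensity (fun x ↦ ∏ i, f i (x i)) (Set.univ.pi s)
    _ = ∫⁻ x, ∏ i, (s i).indicator (f i) (x i) ∂Measure.pi μ := by
      rw [withDensity_apply _ (.univ_pi hs), ← lintegral_indicator (.univ_pi hs), hind]
    _ = ∏ i, ∫⁻ x, (s i).indicator (f i) (x i) ∂Measure.pi μ :=
      lintegral_prod_eq_prod_lintegral_of_indepFun _
        (fun i (x : ∀ i, X i) ↦ (s i).indicator (f i) (x i))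
        (iIndepFun_pi fun i ↦ (hm i).aemeasurable)
        fun i ↦ (hm i).comp (measurable_pi_apply i)
    _ = ∏ i, (μ i).withDensity (f i) (s i) := by
      refine Finset.prod_congr rfl fun i _ ↦ ?_
      rw [(measurePreserving_eval μ i).lintegral_comp (hm i), lintegral_indicator (hs i),
        withDensity_apply _ (hs i)]

end Measure

lemma gaussianReal_eq_map_standard (m : ℝ) (v : ℝ≥0) :
    gaussianReal m v = (gaussianReal 0 1).map (fun z ↦ √v * z + m) := by
  have hcomp : (fun z ↦ √v * z + m) = (· + m) ∘ (√v * ·) := rfl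
  rw [hcomp, ← Measure.map_map (by fun_prop) (by fun_prop), gaussianReal_map_const_mul,
    gaussianReal_map_add_const]
  congr 1
  · simp
  · ext
    simp

instance isNegInvariant_gaussianReal_zero (v : ℝ≥0) : (gaussianReal 0 v).IsNegInvariant where
  neg_eq_self := gaussianReal_map_neg.trans (by rw [neg_zero])

lemma gaussianReal_zero_Ioi_zero_le (v : ℝ≥0) : gaussianReal 0 v (Set.Ioi 0) ≤ 2⁻¹ := by
  refine measure_le_half_of_disjoint_neg measurableSet_Ioi ?_
  exact Set.disjoint_left.2 fun x hneg hpos ↦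
    lt_asymm (Set.mem_Ioi.1 hpos) (neg_pos.1 (Set.mem_preimage.1 hneg))

lemma gaussianPDFReal_le (m : ℝ) (v : ℝ≥0) (x : ℝ) :
    gaussianPDFReal m v x ≤ (√(2 * Real.pi * v))⁻¹ := by
  refine mul_le_of_le_one_right (by positivity) (Real.exp_le_one_iff.2 ?_)
  exact div_nonpos_of_nonpos_of_nonneg (neg_nonpos.2 (sq_nonneg _)) (by positivity)

lemma gaussianReal_apply_le_mul_volume (m : ℝ) {v : ℝ≥0} (hv : v ≠ 0) (s : Set ℝ) :
    gaussianReal m v s ≤ ENNReal.ofReal (√(2 * Real.pi * v))⁻¹ * volume s := by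
  rw [gaussianReal_of_var_ne_zero m hv]
  exact withDensity_apply_le_mul _ fun x _ ↦ ENNReal.ofReal_le_ofReal (gaussianPDFReal_le m v x)

section PrivacyLoss

/-- The privacy loss at the output `x`: the log-likelihood ratio of `N(m, v)` against `N(m', v)`.
The normalizing constants of the two densities cancel. -/
noncomputable def privacyLoss (m m' : ℝ) (v : ℝ≥0) (x : ℝ) : ℝ :=
  ((x - m') ^ 2 - (x - m) ^ 2) / (2 * v)

@[fun_prop]
lemma measurable_privacyLoss (m m' : ℝ) (v : ℝ≥0) : Measurable (privacyLoss m m' v) := by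
  unfold privacyLoss
  fun_prop

lemma gaussianReal_eq_withDensity_exp_privacyLoss (m m' : ℝ) {v : ℝ≥0} (hv : v ≠ 0) :
    gaussianReal m v = (gaussianReal m' v).withDensity
      (fun x ↦ ENNReal.ofReal (Real.exp (privacyLoss m m' v x))) := by
  rw [gaussianReal_of_var_ne_zero _ hv, gaussianReal_of_var_ne_zero _ hv,
    ← withDensity_mul _ (measurable_gaussianPDF _ _) (by fun_prop)]
  congr 1
  ext x
  rw [Pi.mul_apply, gaussianPDF, gaussianPDF, ← ENNReal.ofReal_mul (gaussianPDFReal_nonneg _ _ _),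
    gaussianPDFReal, gaussianPDFReal, mul_assoc _ (Real.exp _), ← Real.exp_add, privacyLoss]
  congr 3
  ring

lemma gaussianReal_apply_le_exp_mul {m m' : ℝ} {v : ℝ≥0} (hv : v ≠ 0) {b : ℝ} {A : Set ℝ}
    (hb : ∀ x ∈ A, privacyLoss m m' v x ≤ b) :
    gaussianReal m v A ≤ ENNReal.ofReal (Real.exp b) * gaussianReal m' v A := by
  rw [gaussianReal_eq_withDensity_exp_privacyLoss m m' hv]
  exact withDensity_apply_le_mul _ fun x hx ↦
    ENNReal.ofReal_le_ofReal (Real.exp_le_exp.2 (hb x hx))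

lemma map_privacyLoss_gaussianReal (m m' : ℝ) {v : ℝ≥0} (hv : v ≠ 0) :
    (gaussianReal m v).map (privacyLoss m m' v)
      = gaussianReal (↑(nndist m m' ^ 2 / v) / 2) (nndist m m' ^ 2 / v) := by
  have hv' : (v : ℝ) ≠ 0 := NNReal.coe_ne_zero.2 hv
  have haffine : privacyLoss m m' v
      = (· + (m' ^ 2 - m ^ 2) / (2 * v)) ∘ ((m - m') / v * ·) := by
    ext x
    simp only [privacyLoss, Function.comp_apply]
    field_simp
    ring
  rw [haffine, ← Measure.map_map (by fun_prop) (by fun_prop), gaussianReal_map_const_mul,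
    gaussianReal_map_add_const]
  congr 1
  · simp only [NNReal.coe_div, NNReal.coe_pow, coe_nndist, Real.dist_eq, sq_abs]
    field_simp
    ring
  · ext
    simp only [NNReal.coe_mul, NNReal.coe_mk, NNReal.coe_div, NNReal.coe_pow, coe_nndist,
      Real.dist_eq, sq_abs]
    field_simp

variable {ι : Type*} [Fintype ι]

/-- The squared Mahalanobis distance between `m` and `m'` for the covariance `diag(v)`; it is
`‖m - m'‖₂² / σ²` for the spherical covariance `σ² I`. -/
noncomputable def mahalanobisSq (m m' : ι → ℝ) (v : ι → ℝ≥0) : ℝ≥0 :=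
  ∑ j, nndist (m j) (m' j) ^ 2 / v j

lemma sqrt_mahalanobisSq_spherical (m m' : ι → ℝ) {σ : ℝ} (hσ : 0 ≤ σ) :
    √(mahalanobisSq m m' fun _ ↦ (σ ^ 2).toNNReal) = √(∑ j, (m j - m' j) ^ 2) / σ := by
  simp only [mahalanobisSq, NNReal.coe_sum, NNReal.coe_div, NNReal.coe_pow, coe_nndist,
    Real.dist_eq, sq_abs, ← Finset.sum_div, Real.coe_toNNReal _ (sq_nonneg σ),
    Real.sqrt_div' _ (sq_nonneg σ), Real.sqrt_sq hσ]

lemma sqrt_mahalanobisSq_spherical_mul_le {m m' : ι → ℝ} {Δ ε σ c : ℝ} (hε : 0 < ε) (hc : 0 ≤ c)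
    (hσ : 0 < σ) (hnorm : √(∑ j, (m j - m' j) ^ 2) ≤ Δ) (hscale : Δ / ε * c ≤ σ) :
    √(mahalanobisSq m m' fun _ ↦ (σ ^ 2).toNNReal) * c ≤ ε := by
  rw [sqrt_mahalanobisSq_spherical m m' hσ.le, div_mul_eq_mul_div, div_le_iff₀ hσ]
  calc √(∑ j, (m j - m' j) ^ 2) * c
    _ ≤ Δ * c := by gcongr
    _ = ε * (Δ / ε * c) := by field_simp
    _ ≤ ε * σ := by gcongr

lemma map_sum_pi_gaussianReal (m : ι → ℝ) (v : ι → ℝ≥0) :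
    (Measure.pi fun j ↦ gaussianReal (m j) (v j)).map (fun x ↦ ∑ j, x j)
      = gaussianReal (∑ j, m j) (∑ j, v j) := by
  refine Measure.ext_of_charFun ?_
  ext t
  simp only [charFun_map_sum_pi_eq_prod, Finset.prod_apply, charFun_gaussianReal,
    ← Complex.exp_sum, Complex.ofReal_sum, NNReal.coe_sum, Finset.sum_sub_distrib,
    Finset.mul_sum, Finset.sum_mul, Finset.sum_div]

lemma pi_gaussianReal_eq_withDensity_exp_privacyLoss (m m' : ι → ℝ) {v : ι → ℝ≥0}
    (hv : ∀ j, v j ≠ 0) :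
    Measure.pi (fun j ↦ gaussianReal (m j) (v j))
      = (Measure.pi fun j ↦ gaussianReal (m' j) (v j)).withDensity
        (fun x ↦ ENNReal.ofReal (Real.exp (∑ j, privacyLoss (m j) (m' j) (v j) (x j)))) := by
  have hdens (j : ι) := gaussianReal_eq_withDensity_exp_privacyLoss (m j) (m' j) (hv j)
  simp only [hdens]
  rw [pi_withDensity _ fun j ↦ by fun_prop]
  simp only [Real.exp_sum, ENNReal.ofReal_prod_of_nonneg fun _ _ ↦ (Real.exp_pos _).le]

lemma map_sum_privacyLoss_pi_gaussianReal (m m' : ι → ℝ) {v : ι → ℝ≥0} (hv : ∀ j, v j ≠ 0) :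
    (Measure.pi fun j ↦ gaussianReal (m j) (v j)).map
        (fun x ↦ ∑ j, privacyLoss (m j) (m' j) (v j) (x j))
      = gaussianReal (mahalanobisSq m m' v / 2) (mahalanobisSq m m' v) := by
  have hcomp : (fun x : ι → ℝ ↦ ∑ j, privacyLoss (m j) (m' j) (v j) (x j))
      = (fun y ↦ ∑ j, y j) ∘ fun x j ↦ privacyLoss (m j) (m' j) (v j) (x j) := rfl
  have hlaw (j : ι) := map_privacyLoss_gaussianReal (m j) (m' j) (hv j)
  have (j : ι) : IsProbabilityMeasure
      ((gaussianReal (m j) (v j)).map (privacyLoss (m j) (m' j) (v j))) := by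
    rw [hlaw]
    infer_instance
  rw [hcomp, ← Measure.map_map (by fun_prop) (by fun_prop), Measure.pi_map_pi fun j ↦ by fun_prop]
  simp only [hlaw, map_sum_pi_gaussianReal, mahalanobisSq, NNReal.coe_sum, Finset.sum_div]

theorem pi_gaussianReal_apply_le (m m' : ι → ℝ) {v : ι → ℝ≥0} (hv : ∀ j, v j ≠ 0) (ε : ℝ)
    (S : Set (ι → ℝ)) :
    Measure.pi (fun j ↦ gaussianReal (m j) (v j)) S
      ≤ ENNReal.ofReal (Real.exp ε) * Measure.pi (fun j ↦ gaussianReal (m' j) (v j)) S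
        + gaussianReal (mahalanobisSq m m' v / 2) (mahalanobisSq m m' v) (Set.Ioi ε) := by
  have hdens := pi_gaussianReal_eq_withDensity_exp_privacyLoss m m' hv
  have h := withDensity_apply_le_mul_add (Measure.pi fun j ↦ gaussianReal (m' j) (v j))
    (fun x ↦ ENNReal.ofReal (Real.exp (∑ j, privacyLoss (m j) (m' j) (v j) (x j))))
    (ENNReal.ofReal (Real.exp ε)) S
  simp only [← hdens, ENNReal.ofReal_lt_ofReal_iff (Real.exp_pos _), Real.exp_lt_exp] at h
  rwa [← map_sum_privacyLoss_pi_gaussianReal m m' hv,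
    Measure.map_apply (by fun_prop) measurableSet_Ioi]

end PrivacyLoss

lemma gaussianReal_zero_one_Ioi_sub_le {c s : ℝ} (hc : 0 ≤ c) (hs : 0 ≤ s) :
    gaussianReal 0 1 (Set.Ioi (c - s)) ≤
      ENNReal.ofReal (Real.exp (-c ^ 2 / 2) * (1 / 2 + Real.exp (c * s) * s / √(2 * Real.pi))) := by
  have hshift : gaussianReal 0 1 (Set.Ioi (c - s)) = gaussianReal (-c) 1 (Set.Ioi (-s)) := by
    rw [← zero_sub c, ← gaussianReal_map_sub_const, Measure.map_apply (by fun_prop)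
      measurableSet_Ioi, Set.preimage_sub_const_Ioi, neg_add_eq_sub]
  have hloss (x : ℝ) : privacyLoss (-c) 0 1 x = -c ^ 2 / 2 + c * -x := by
    simp only [privacyLoss, NNReal.coe_one]
    ring
  have hneg : gaussianReal (-c) 1 (Set.Ioc (-s) 0)
      ≤ ENNReal.ofReal (Real.exp (-c ^ 2 / 2 + c * s) * ((√(2 * Real.pi))⁻¹ * s)) := by
    calc gaussianReal (-c) 1 (Set.Ioc (-s) 0)
      _ ≤ ENNReal.ofReal (Real.exp (-c ^ 2 / 2 + c * s))
          * gaussianReal 0 1 (Set.Ioc (-s) 0) := by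
        refine gaussianReal_apply_le_exp_mul one_ne_zero fun x hx ↦ (hloss x).trans_le ?_
        gcongr
        linarith [hx.1]
      _ ≤ _ := by
        rw [ENNReal.ofReal_mul (by positivity), ENNReal.ofReal_mul (by positivity)]
        gcongr
        simpa using gaussianReal_apply_le_mul_volume 0 one_ne_zero (Set.Ioc (-s) 0)
  have hpos : gaussianReal (-c) 1 (Set.Ioi 0)
      ≤ ENNReal.ofReal (Real.exp (-c ^ 2 / 2) * (1 / 2)) := by
    calc gaussianReal (-c) 1 (Set.Ioi 0)
      _ ≤ ENNReal.ofReal (Real.exp (-c ^ 2 / 2)) * gaussianReal 0 1 (Set.Ioi 0) := by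
        refine gaussianReal_apply_le_exp_mul one_ne_zero fun x hx ↦ (hloss x).trans_le ?_
        linarith [mul_nonneg hc (Set.mem_Ioi.1 hx).le]
      _ ≤ _ := by
        rw [ENNReal.ofReal_mul (by positivity)]
        gcongr
        simpa using gaussianReal_zero_Ioi_zero_le 1
  rw [hshift, ← Set.Ioc_union_Ioi_eq_Ioi (neg_nonpos.2 hs)]
  refine (measure_union_le _ _).trans ((add_le_add hneg hpos).trans_eq ?_)
  rw [← ENNReal.ofReal_add (by positivity) (by positivity), Real.exp_add]
  congr 1
  ring

lemma gaussianReal_zero_one_Ioi_sub_half_inv_le {c : ℝ} (hc : 2 / 3 ≤ c) :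
    gaussianReal 0 1 (Set.Ioi (c - 1 / (2 * c))) ≤
      ENNReal.ofReal (5 / 4 * Real.exp (-c ^ 2 / 2)) := by
  have hc0 : 0 < c := by linarith
  refine (gaussianReal_zero_one_Ioi_sub_le hc0.le (by positivity)).trans ?_
  rw [mul_comm (5 / 4)]
  gcongr
  have hexp : Real.exp (c * (1 / (2 * c))) ≤ 2 := by
    rw [show c * (1 / (2 * c)) = 1 / 2 by field_simp]
    exact (Real.exp_bound_div_one_sub_of_interval (by norm_num) (by norm_num)).trans
      (by norm_num)
  have hs : 1 / (2 * c) ≤ 3 / 4 := by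
    rw [div_le_iff₀ (by positivity)]
    linarith
  have hsqrt : 2 ≤ √(2 * Real.pi) := Real.le_sqrt_of_sq_le (by linarith [Real.pi_gt_three])
  calc 1 / 2 + Real.exp (c * (1 / (2 * c))) * (1 / (2 * c)) / √(2 * Real.pi)
    _ ≤ 1 / 2 + 2 * (3 / 4) / 2 := by gcongr
    _ = 5 / 4 := by norm_num

lemma gaussianReal_div_two_Ioi_le {q : ℝ≥0} {c ε : ℝ} (hc : 2 / 3 ≤ c) (hε : ε ≤ 1)
    (hqc : √q * c ≤ ε) :
    gaussianReal (q / 2) q (Set.Ioi ε) ≤ ENNReal.ofReal (5 / 4 * Real.exp (-c ^ 2 / 2)) := by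
  have hc0 : 0 < c := by linarith
  rw [gaussianReal_eq_map_standard, Measure.map_apply (by fun_prop) measurableSet_Ioi]
  refine (measure_mono fun z hz ↦ ?_).trans (gaussianReal_zero_one_Ioi_sub_half_inv_le hc)
  contrapose! hz
  simp only [Set.mem_preimage, Set.mem_Ioi, not_lt] at hz ⊢
  have hq : √q ≤ 1 / c := (le_div_iff₀ hc0).2 (hqc.trans hε)
  calc √q * z + q / 2
    _ = √q * z + √q * √q / 2 := by rw [Real.mul_self_sqrt q.coe_nonneg]
    _ ≤ √q * (c - 1 / (2 * c)) + √q * (1 / c) / 2 := by gcongr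
    _ = √q * c := by
      field_simp
      ring
    _ ≤ ε := hqc

lemma two_thirds_le_sqrt_two_mul_log {δ : ℝ} (hδ : δ ∈ Set.Ioc (0 : ℝ) 1) :
    2 / 3 ≤ √(2 * Real.log (1.25 / δ)) := by
  have hlog : 2 / 9 ≤ Real.log (1.25 / δ) := by
    calc (2 / 9 : ℝ) = 2 * (1 / 4) / (1 / 4 + 2) := by norm_num
      _ ≤ Real.log (1 + 1 / 4) := Real.le_log_one_add_of_nonneg (by norm_num)
      _ ≤ Real.log (1.25 / δ) := by
        refine Real.log_le_log (by norm_num) ((le_div_iff₀ hδ.1).2 ?_)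
        linarith [hδ.2]
  exact Real.le_sqrt_of_sq_le (by linarith)

lemma five_fourths_mul_exp_neg_sq_sqrt_two_mul_log {δ : ℝ} (hδ : δ ∈ Set.Ioc (0 : ℝ) 1) :
    5 / 4 * Real.exp (-√(2 * Real.log (1.25 / δ)) ^ 2 / 2) = δ := by
  have hsqrt : 0 < √(2 * Real.log (1.25 / δ)) := by linarith [two_thirds_le_sqrt_two_mul_log hδ]
  have hδ0 := hδ.1
  rw [Real.sq_sqrt (Real.sqrt_pos.1 hsqrt).le, neg_div, mul_div_cancel_left₀ _ two_ne_zero,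
    Real.exp_neg, Real.exp_log (by positivity)]
  field_simp
  norm_num

theorem gaussian_mechanism_dp_general {ι : Type*} [Fintype ι] (m m' : ι → ℝ) {v : ι → ℝ≥0}
    (hv : ∀ j, v j ≠ 0) {ε δ : ℝ} (hε : ε ≤ 1) (hδ : δ ∈ Set.Ioc (0 : ℝ) 1)
    (hnoise : √(mahalanobisSq m m' v) * √(2 * Real.log (1.25 / δ)) ≤ ε) (S : Set (ι → ℝ)) :
    Measure.pi (fun j ↦ gaussianReal (m j) (v j)) S
      ≤ ENNReal.ofReal (Real.exp ε) * Measure.pi (fun j ↦ gaussianReal (m' j) (v j)) S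
        + ENNReal.ofReal δ := by
  refine (pi_gaussianReal_apply_le m m' hv ε S).trans ?_
  gcongr
  exact (gaussianReal_div_two_Ioi_le (two_thirds_le_sqrt_two_mul_log hδ) hε hnoise).trans_eq
    (by rw [five_fourths_mul_exp_neg_sq_sqrt_two_mul_log hδ])

/-- `(ε, δ)`-differential privacy of the Gaussian mechanism: if `‖m − m'‖₂ ≤ Δ`,
`ε, δ ∈ (0,1)` and `σ ≥ (Δ/ε)·√(2 log(1.25/δ))`, then the spherical Gaussians
`N(m, σ²I)` and `N(m', σ²I)` (products of one-dimensional Gaussians `N(m_j, σ²)` and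
`N(m'_j, σ²)`) satisfy `μ(S) ≤ e^ε·ν(S) + δ` for every measurable `S ⊆ ℝ^d`. -/
theorem gaussian_mechanism_dp (d : ℕ) (hd : 0 < d) (m m' : Fin d → ℝ)
    (Δ ε δ σ : ℝ) (hΔ : 0 < Δ)
    (hnorm : Real.sqrt (∑ j, (m j - m' j) ^ 2) ≤ Δ)
    (hε : ε ∈ Set.Ioo (0 : ℝ) 1) (hδ : δ ∈ Set.Ioo (0 : ℝ) 1)
    (hσ : σ ≥ (Δ / ε) * Real.sqrt (2 * Real.log (1.25 / δ))) :
    ∀ S : Set (Fin d → ℝ), MeasurableSet S →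
      Measure.pi (fun j => gaussianReal (m j) ((σ ^ 2).toNNReal)) S
        ≤ ENNReal.ofReal (Real.exp ε)
            * Measure.pi (fun j => gaussianReal (m' j) ((σ ^ 2).toNNReal)) S
          + ENNReal.ofReal δ := by
  intro S _
  have hδ' : δ ∈ Set.Ioc (0 : ℝ) 1 := Set.Ioo_subset_Ioc_self hδ
  have hc : 0 < √(2 * Real.log (1.25 / δ)) := by linarith [two_thirds_le_sqrt_two_mul_log hδ']
  have hσ0 : 0 < σ := (mul_pos (div_pos hΔ hε.1) hc).trans_le hσ
  exact gaussian_mechanism_dp_general m m' (fun _ ↦ (Real.toNNReal_pos.2 (pow_pos hσ0 2)).ne')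
    hε.2.le hδ' (sqrt_mahalanobisSq_spherical_mul_le hε.1 hc.le hσ0 hnorm hσ) S
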